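/- For every positive integer k there exists a legal sequence σ of moves in the auxiliary game whose initial position and resulting position both equal the starting position P and which satisfies F(σ, i, 2) = k for every i with 1 ≤ i ≤ m. -/

import Mathlib

/-!
The auxiliary game of Shitov, "Chess God's number grows exponentially".

Fix `m ≥ 1`.  The graph `G` has cycle vertices `(0,t)` for `t ∈ ℤ/3m` and triangle
vertices `(i,j)` for `1 ≤ i ≤ m`, `j ∈ {1,2,3}`.  We use 0-based indices: the
triangle vertex `(i,j)` of the paper (with `1 ≤ i ≤ m`, `1 ≤ j ≤ 3`) is
`Vtx.tri ⟨i-1⟩ ⟨j-1⟩`, and its paired cycle vertex `(0, 3i+j-3)` is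
`Vtx.cycle (pairC ⟨i-1⟩ ⟨j-1⟩)` where `pairC i j = 3*i + j + 1 (mod 3m)`.
-/

namespace AuxGame

/-- What occupies a vertex: nothing, the chip, or a switch. -/
inductive Occ : Type
  | empty : Occ
  | chip : Occ
  | switch : Occ
deriving DecidableEq

/-- Vertices of the graph `G`: the big cycle of length `3m`, and `m` triangles. -/
inductive Vtx (m : ℕ) : Type
  | cycle : ZMod (3 * m) → Vtx m
  | tri : Fin m → ZMod 3 → Vtx m
deriving DecidableEq

/-- The cycle vertex paired with the triangle vertex `(i,j)` (0-based):
this is the vertex `(0, 3i+j-3)` of the paper. -/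
def pairC {m : ℕ} (i : Fin m) (j : ZMod 3) : ZMod (3 * m) :=
  ((3 * i.val + j.val + 1 : ℕ) : ZMod (3 * m))

/-- Adjacency in `G`: consecutive vertices of the big cycle, and distinct
vertices of one triangle. -/
def Adjacent {m : ℕ} : Vtx m → Vtx m → Prop
  | .cycle t, .cycle t' => t' = t + 1 ∨ t' = t - 1
  | .tri i j, .tri i' j' => i = i' ∧ j ≠ j'
  | _, _ => False

/-- `u` and `v` form a pair `{(i,j), (0,3i+j-3)}` (in either order). -/
def IsPair {m : ℕ} : Vtx m → Vtx m → Prop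
  | .tri i j, .cycle t => t = pairC i j
  | .cycle t, .tri i j => t = pairC i j
  | _, _ => False

/-- A position of the auxiliary game: every vertex is empty, or carries the chip,
or carries (exactly) one switch; there is exactly one chip; and for every pair
`{(i,j), (0,3i+j-3)}` at least one of the two vertices carries a switch. -/
structure Pos (m : ℕ) where
  occ : Vtx m → Occ
  chip_exists_unique : ∃! v : Vtx m, occ v = Occ.chip
  switch_pair : ∀ (i : Fin m) (j : ZMod 3),
    occ (Vtx.tri i j) = Occ.switch ∨ occ (Vtx.cycle (pairC i j)) = Occ.switch

/-- A single move: the chip moves from vertex `from'` to vertex `to'`,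
transforming position `src` into position `dst`. -/
structure Move (m : ℕ) where
  src : Pos m
  dst : Pos m
  from' : Vtx m
  to' : Vtx m

/-- Legality of a single move: either a *jump* (the chip moves to an adjacent
vacant vertex of its triangle, or to an adjacent vacant vertex of the cycle),
or a *swap* (the chip, standing on one vertex of a pair, is exchanged with the
switch on the other vertex of that pair).  In both cases the destination gets
the chip, the source gets whatever was at the destination (nothing for a jump,
the switch for a swap), and all other vertices are unchanged. -/
def Move.Legal {m : ℕ} (mv : Move m) : Prop :=
  mv.src.occ mv.from' = Occ.chip ∧
  ((Adjacent mv.from' mv.to' ∧ mv.src.occ mv.to' = Occ.empty) ∨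
    (IsPair mv.from' mv.to' ∧ mv.src.occ mv.to' = Occ.switch)) ∧
  mv.dst.occ mv.to' = Occ.chip ∧
  mv.dst.occ mv.from' = mv.src.occ mv.to' ∧
  ∀ w : Vtx m, w ≠ mv.from' → w ≠ mv.to' → mv.dst.occ w = mv.src.occ w

/-- `Leads σ A B`: `σ` is a legal sequence of moves with initial position `A`
and resulting position `B` (each move is legal, and the resulting position of
each move is the initial position of the next one). -/
inductive Leads {m : ℕ} : List (Move m) → Pos m → Pos m → Prop
  | nil (A : Pos m) : Leads [] A A
  | cons (mv : Move m) (σ : List (Move m)) (B : Pos m) :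
      mv.Legal → Leads σ mv.dst B → Leads (mv :: σ) mv.src B

/-- `σ` is a legal sequence of moves. -/
def LegalSeq {m : ℕ} (σ : List (Move m)) : Prop :=
  ∃ A B : Pos m, Leads σ A B

/-- `#(σ, u, v)`: the number of single moves in `σ` carrying the chip from
vertex `u` to vertex `v` (used with `u`, `v` in one component, where such moves
are exactly jumps). -/
def jmpCount {m : ℕ} (σ : List (Move m)) (u v : Vtx m) : ℕ :=
  (σ.filter fun mv => decide (mv.from' = u ∧ mv.to' = v)).length

/-- The successor of a vertex in its own component: `(0,t) ↦ (0,t+1)` and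
`(i,j) ↦ (i,j+1 mod 3)`. -/
def nxt {m : ℕ} : Vtx m → Vtx m
  | .cycle t => .cycle (t + 1)
  | .tri i j => .tri i (j + 1)

/-- The predecessor of a vertex in its own component. -/
def prv {m : ℕ} : Vtx m → Vtx m
  | .cycle t => .cycle (t - 1)
  | .tri i j => .tri i (j - 1)

/-- Twice the flow through a vertex `v = (i₀,j₀)`:
`#(σ,i₀,j₀-1,j₀) + #(σ,i₀,j₀,j₀+1) - #(σ,i₀,j₀+1,j₀) - #(σ,i₀,j₀,j₀-1)` as an integer. -/
def dflow {m : ℕ} (σ : List (Move m)) (v : Vtx m) : ℤ :=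
  (jmpCount σ (prv v) v : ℤ) + (jmpCount σ v (nxt v) : ℤ)
    - (jmpCount σ (nxt v) v : ℤ) - (jmpCount σ v (prv v) : ℤ)

/-- The flow `F(σ, i₀, j₀)` through the vertex `v = (i₀,j₀)`. -/
def flow {m : ℕ} (σ : List (Move m)) (v : Vtx m) : ℚ :=
  (dflow σ v : ℚ) / 2

/-- `P` is the starting position: switches on `(i,1)`, `(i,3)`, `(0,3i-1)`
(0-based: `tri i 0`, `tri i 2`, `cycle (pairC i 1)`), the chip on some cycle
vertex not of the form `(0,3i-1)`, and all other vertices empty. -/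
def IsStarting {m : ℕ} (P : Pos m) : Prop :=
  (∀ i : Fin m,
    P.occ (Vtx.tri i 0) = Occ.switch ∧
    P.occ (Vtx.tri i 1) = Occ.empty ∧
    P.occ (Vtx.tri i 2) = Occ.switch ∧
    P.occ (Vtx.cycle (pairC i 1)) = Occ.switch) ∧
  ∃ t : ZMod (3 * m),
    (∀ i : Fin m, t ≠ pairC i 1) ∧
    P.occ (Vtx.cycle t) = Occ.chip ∧
    ∀ s : ZMod (3 * m), s ≠ t → (∀ i : Fin m, s ≠ pairC i 1) →
      P.occ (Vtx.cycle s) = Occ.empty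

end AuxGame

/-!
Restrict to positions in which every pair `{(i,j), (0,3i+j-3)}` carries exactly one switch; such a
position is determined by which member of each pair is free of a switch and by the pair holding
the chip.

If `(0,3i+j-3)` holds the chip and `(i,j+1)` is vacant, the chip can *detour*: swap down to `(i,j)`,
jump to `(i,j+1)`, swap up to the cycle. This exchanges the roles of the pairs `j` and `j+1`.
In the starting position the chip crosses the cycle segment above the `i`-th triangle by the detours
`1 → 2`, `3 → 1`, `2 → 3`, with cycle jumps `2 → 3` and `1 → 2` in between. All switches return to
their places, and the chip has turned once around the triangle; the triangle jumps `1 → 2` and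
`2 → 3` each contribute `½` to the flow through `(i,2)`. Crossing all the triangles in turn, `k`
times over, proves the theorem. (Indices here are the paper's 1-based ones.)
-/

namespace AuxGame

variable {m : ℕ}

attribute [ext] Pos

theorem comp_swap_comp_swap_comp_swap {α β : Type*} [DecidableEq α] (f : α → β) {a c : α}
    (hac : f a = f c) (b : α) :
    ((f ∘ Equiv.swap a b) ∘ Equiv.swap c a) ∘ Equiv.swap b c = f := by
  funext x
  simp only [Function.comp_apply, Equiv.swap_apply_def]
  grind

section Reachability

theorem Leads.append {σ τ : List (Move m)} {A B C : Pos m} (hσ : Leads σ A B)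
    (hτ : Leads τ B C) : Leads (σ ++ τ) A C := by
  induction hσ with
  | nil A => exact hτ
  | cons mv σ B hmv _ ih => exact .cons mv _ _ hmv (ih hτ)

theorem jmpCount_singleton (mv : Move m) (u v : Vtx m) :
    jmpCount [mv] u v = if mv.from' = u ∧ mv.to' = v then 1 else 0 := by
  by_cases h : mv.from' = u ∧ mv.to' = v <;> simp [jmpCount, h]

theorem dflow_nil (v : Vtx m) : dflow [] v = 0 := by
  simp [dflow, jmpCount]

theorem dflow_append (σ τ : List (Move m)) (v : Vtx m) :
    dflow (σ ++ τ) v = dflow σ v + dflow τ v := by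
  simp only [dflow, jmpCount, List.filter_append, List.length_append]
  push_cast
  ring

theorem dflow_singleton_tri_of_cycle {mv : Move m} {t : ZMod (3 * m)}
    (h : mv.from' = .cycle t ∨ mv.to' = .cycle t) (i : Fin m) (j : ZMod 3) :
    dflow [mv] (.tri i j) = 0 := by
  rcases h with h | h <;> simp [dflow, jmpCount_singleton, nxt, prv, h]

theorem dflow_singleton_tri_add_one (A B : Pos m) (i a : Fin m) (j l : ZMod 3) :
    dflow [⟨A, B, .tri i j, .tri i (j + 1)⟩] (.tri a l) =
      Pi.single (M := fun _ : Fin m ↦ ℤ) i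
        ((if l = j then 1 else 0) + if l = j + 1 then 1 else 0) a := by
  obtain rfl | hai := eq_or_ne a i
  · simp only [dflow, jmpCount_singleton, nxt, prv, Vtx.tri.injEq, true_and, Pi.single_eq_same]
    revert j l
    decide
  · simp [dflow, jmpCount_singleton, nxt, prv, hai, hai.symm]

/-- `B` can be reached from `A` by a legal sequence whose doubled flow (to stay in `ℤ`) through
the middle vertex of the `i`-th triangle is `F i`. -/
def Reaches (A B : Pos m) (F : Fin m → ℤ) : Prop :=
  ∃ σ : List (Move m), Leads σ A B ∧ ∀ i, dflow σ (.tri i 1) = F i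

theorem Reaches.refl (A : Pos m) : Reaches A A 0 :=
  ⟨[], .nil A, fun _ ↦ dflow_nil _⟩

theorem Reaches.trans {A B C : Pos m} {F G : Fin m → ℤ} (hAB : Reaches A B F)
    (hBC : Reaches B C G) : Reaches A C (F + G) := by
  obtain ⟨σ, hσ, hF⟩ := hAB
  obtain ⟨τ, hτ, hG⟩ := hBC
  exact ⟨σ ++ τ, hσ.append hτ, fun i ↦ by rw [dflow_append, hF, hG, Pi.add_apply]⟩

theorem Reaches.iterate {A : Pos m} {F : Fin m → ℤ} (h : Reaches A A F) (k : ℕ) :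
    Reaches A A (k • F) := by
  induction k with
  | zero => simpa only [zero_nsmul] using Reaches.refl A
  | succ k ih => simpa only [succ_nsmul] using ih.trans h

theorem Reaches.of_legal {mv : Move m} (h : mv.Legal) :
    Reaches mv.src mv.dst fun i ↦ dflow [mv] (.tri i 1) :=
  ⟨[mv], .cons mv [] _ h (.nil _), fun _ ↦ rfl⟩

theorem Reaches.of_legal_of_cycle {mv : Move m} (h : mv.Legal) {t : ZMod (3 * m)}
    (ht : mv.from' = .cycle t ∨ mv.to' = .cycle t) : Reaches mv.src mv.dst 0 :=
  ⟨[mv], .cons mv [] _ h (.nil _), fun i ↦ dflow_singleton_tri_of_cycle ht i 1⟩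

end Reachability

section Pairs

/-- The index `(i,j)` of the pair formed by a triangle vertex and its cycle vertex. -/
abbrev PairIdx (m : ℕ) : Type := Fin m × ZMod 3

theorem pairC_injective : Function.Injective fun p : PairIdx m ↦ pairC p.1 p.2 := by
  rintro ⟨i, j⟩ ⟨i', j'⟩ h
  have hmod : 3 * i.val + j.val ≡ 3 * i'.val + j'.val [MOD 3 * m] :=
    Nat.ModEq.add_right_cancel' 1 ((ZMod.natCast_eq_natCast_iff ..).1 h)
  have hj := ZMod.val_lt j
  have hj' := ZMod.val_lt j'
  have heq := hmod.eq_of_lt_of_lt (by omega) (by omega)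
  have hi : i = i' := Fin.ext (by omega)
  have hj : j = j' := ZMod.val_injective 3 (by omega)
  rw [hi, hj]

theorem pairC_surjective [NeZero m] :
    Function.Surjective fun p : PairIdx m ↦ pairC p.1 p.2 := by
  refine ((Fintype.bijective_iff_injective_and_card _).2 ⟨pairC_injective, ?_⟩).2
  simp [ZMod.card, mul_comm]

theorem pairC_add_one (i : Fin m) {j : ZMod 3} (hj : j ≠ 2) :
    pairC i (j + 1) = pairC i j + 1 := by
  have hval : (j + 1).val = j.val + 1 := by
    revert j
    decide
  simp only [pairC, hval]
  push_cast
  ring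

theorem pairC_add_one_zero [NeZero m] (i : Fin m) : pairC (i + 1) 0 = pairC i 2 + 1 := by
  have hval : (i + 1).val ≡ i.val + 1 [MOD m] := by
    simpa [Fin.val_add] using Nat.mod_modEq (i.val + 1) m
  calc pairC (i + 1) 0 = ((3 * (i.val + 1) + 1 : ℕ) : ZMod (3 * m)) :=
        (ZMod.natCast_eq_natCast_iff ..).2 ((hval.mul_left' 3).add_right 1)
    _ = pairC i 2 + 1 := by
        rw [pairC, show (2 : ZMod 3).val = 2 from rfl]
        push_cast
        ring

/-- The two vertices of the pair `p`: the cycle vertex for `true`, the triangle vertex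
for `false`. -/
def pairVtx : Bool → PairIdx m → Vtx m
  | true, p => .cycle (pairC p.1 p.2)
  | false, p => .tri p.1 p.2

theorem pairVtx_inj {b b' : Bool} {p p' : PairIdx m} :
    pairVtx b p = pairVtx b' p' ↔ b = b' ∧ p = p' := by
  cases b <;> cases b' <;> simp [pairVtx, Prod.ext_iff, pairC_injective.eq_iff]

theorem exists_pairVtx_eq [NeZero m] (v : Vtx m) : ∃ b p, pairVtx b p = v := by
  cases v with
  | cycle t =>
    obtain ⟨p, rfl⟩ := pairC_surjective t
    exact ⟨true, p, rfl⟩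
  | tri i j => exact ⟨false, (i, j), rfl⟩

theorem isPair_pairVtx_not (b : Bool) (p : PairIdx m) :
    IsPair (pairVtx b p) (pairVtx (!b) p) := by
  cases b <;> rfl

end Pairs

section Moves

open scoped Classical in
/-- The occupancy with the chip in the pair `p` and exactly one switch in each pair, where
`free q` tells which vertex of the pair `q`, in the sense of `pairVtx`, carries no switch. -/
noncomputable def occOfFree (free : PairIdx m → Bool) (p : PairIdx m) (v : Vtx m) : Occ :=
  if v = pairVtx (free p) p then .chip
  else if ∃ q, v = pairVtx (free q) q then .empty
  else .switch

variable {free : PairIdx m → Bool} {p q : PairIdx m}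

theorem occOfFree_pairVtx (free : PairIdx m → Bool) (p q : PairIdx m) (b : Bool) :
    occOfFree free p (pairVtx b q) =
      if b = free q then if q = p then .chip else .empty else .switch := by
  simp only [occOfFree, pairVtx_inj]
  aesop

theorem occOfFree_eq_chip_iff {v : Vtx m} :
    occOfFree free p v = .chip ↔ v = pairVtx (free p) p := by
  unfold occOfFree
  split_ifs <;> simp_all

/-- The position with occupancy `occOfFree free p`. -/
noncomputable def Pos.ofFree (free : PairIdx m → Bool) (p : PairIdx m) : Pos m where
  occ := occOfFree free p
  chip_exists_unique :=
    ⟨pairVtx (free p) p, occOfFree_eq_chip_iff.2 rfl, fun _ ↦ occOfFree_eq_chip_iff.1⟩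
  switch_pair i j := by
    have hswitch : occOfFree free p (pairVtx (!free (i, j)) (i, j)) = .switch := by
      simp [occOfFree_pairVtx]
    cases hfree : free (i, j) with
    | true => exact .inl (by rwa [hfree] at hswitch)
    | false => exact .inr (by rwa [hfree] at hswitch)

theorem legal_jump {b : Bool} (hp : free p = b) (hq : free q = b) (hpq : p ≠ q)
    (hadj : Adjacent (pairVtx b p) (pairVtx b q)) :
    Move.Legal ⟨.ofFree free p, .ofFree free q, pairVtx b p, pairVtx b q⟩ := by
  refine ⟨?_, .inl ⟨hadj, ?_⟩, ?_, ?_, fun w hwp hwq ↦ ?_⟩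
  · simp [Pos.ofFree, occOfFree_pairVtx, hp]
  · simp [Pos.ofFree, occOfFree_pairVtx, hq, hpq.symm]
  · simp [Pos.ofFree, occOfFree_pairVtx, hq]
  · simp [Pos.ofFree, occOfFree_pairVtx, hp, hq, hpq, hpq.symm]
  · simp only [Pos.ofFree, occOfFree, hp, hq, hwp, hwq, if_false]

theorem legal_swap (free : PairIdx m → Bool) (p : PairIdx m) :
    Move.Legal ⟨.ofFree free p, .ofFree (Function.update free p (!free p)) p,
      pairVtx (free p) p, pairVtx (!free p) p⟩ := by
  refine ⟨?_, .inr ⟨isPair_pairVtx_not _ p, ?_⟩, ?_, ?_, fun w hw hw' ↦ ?_⟩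
  · simp [Pos.ofFree, occOfFree_pairVtx]
  · simp [Pos.ofFree, occOfFree_pairVtx]
  · simp [Pos.ofFree, occOfFree_pairVtx]
  · simp [Pos.ofFree, occOfFree_pairVtx]
  · have hfree (q : PairIdx m) :
        w = pairVtx (Function.update free p (!free p) q) q ↔ w = pairVtx (free q) q := by
      obtain rfl | hqp := eq_or_ne q p
      · simp [hw, hw']
      · rw [Function.update_of_ne hqp]
    simp only [Pos.ofFree, occOfFree, hfree]

theorem reaches_swap (free : PairIdx m → Bool) (p : PairIdx m) :
    Reaches (.ofFree free p) (.ofFree (Function.update free p (!free p)) p) 0 := by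
  refine Reaches.of_legal_of_cycle (t := pairC p.1 p.2) (legal_swap free p) ?_
  cases free p <;> simp [pairVtx]

theorem reaches_cycle_jump (hp : free p = true) (hq : free q = true) (hpq : p ≠ q)
    (hadj : Adjacent (pairVtx true p) (pairVtx true q)) :
    Reaches (.ofFree free p) (.ofFree free q) 0 :=
  Reaches.of_legal_of_cycle (legal_jump hp hq hpq hadj) (.inl rfl)

theorem reaches_cycle_jump_add_one {i : Fin m} {j : ZMod 3} (hj : j ≠ 2)
    (hfree : free (i, j) = true) (hfree' : free (i, j + 1) = true) :
    Reaches (.ofFree free (i, j)) (.ofFree free (i, j + 1)) 0 :=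
  reaches_cycle_jump hfree hfree' (by simp) (.inl (pairC_add_one i hj))

theorem reaches_tri_jump {i : Fin m} {j : ZMod 3} (hj : free (i, j) = false)
    (hj' : free (i, j + 1) = false) :
    Reaches (.ofFree free (i, j)) (.ofFree free (i, j + 1))
      (Pi.single i ((if 1 = j then 1 else 0) + if 1 = j + 1 then 1 else 0)) := by
  have hadj : Adjacent (pairVtx false (i, j)) (pairVtx false (i, j + 1)) := ⟨rfl, by simp⟩
  convert Reaches.of_legal (legal_jump hj hj' (by simp) hadj) using 1
  exact funext fun a ↦ (dflow_singleton_tri_add_one _ _ i a j 1).symm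

theorem reaches_detour {i : Fin m} {j : ZMod 3} (hj : free (i, j) = true)
    (hj' : free (i, j + 1) = false) :
    Reaches (.ofFree free (i, j)) (.ofFree (free ∘ Equiv.swap (i, j) (i, j + 1)) (i, j + 1))
      (Pi.single i ((if 1 = j then 1 else 0) + if 1 = j + 1 then 1 else 0)) := by
  have hne : (i, j + 1) ≠ (i, j) := by simp
  have down := reaches_swap free (i, j)
  rw [hj, Bool.not_true] at down
  have across := reaches_tri_jump (free := Function.update free (i, j) false)
    (Function.update_self ..) (by rw [Function.update_of_ne hne, hj'])
  have up := reaches_swap (Function.update free (i, j) false) (i, j + 1)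
  rw [Function.update_of_ne hne, hj', Bool.not_false] at up
  have hswap : free ∘ Equiv.swap (i, j) (i, j + 1) =
      Function.update (Function.update free (i, j) false) (i, j + 1) true := by
    rw [Equiv.comp_swap_eq_update, hj, hj', Function.update_comm hne]
  rw [hswap]
  simpa only [zero_add, add_zero] using (down.trans across).trans up

end Moves

section Crossing

variable {free : PairIdx m → Bool} {i : Fin m}

theorem reaches_cross (h₀ : free (i, 0) = true) (h₁ : free (i, 1) = false)
    (h₂ : free (i, 2) = true) :
    Reaches (.ofFree free (i, 0)) (.ofFree free (i, 2)) (Pi.single i 2) := by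
  let free₁ := free ∘ Equiv.swap (i, (0 : ZMod 3)) (i, 1)
  let free₂ := free₁ ∘ Equiv.swap (i, (2 : ZMod 3)) (i, 0)
  have hrestore : free₂ ∘ Equiv.swap (i, (1 : ZMod 3)) (i, 2) = free :=
    comp_swap_comp_swap_comp_swap free (h₀.trans h₂.symm) (i, 1)
  obtain ⟨h₁₀, h₁₁, h₁₂⟩ :
      free₁ (i, 0) = false ∧ free₁ (i, 1) = true ∧ free₁ (i, 2) = true := by
    simp +decide [free₁, Equiv.swap_apply_def, h₀, h₁, h₂]
  obtain ⟨h₂₀, h₂₁, h₂₂⟩ :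
      free₂ (i, 0) = true ∧ free₂ (i, 1) = true ∧ free₂ (i, 2) = false := by
    simp +decide [free₂, Equiv.swap_apply_def, h₁₀, h₁₁, h₁₂]
  have detour₀₁ : Reaches (.ofFree free (i, 0)) (.ofFree free₁ (i, 1)) (Pi.single i 1) :=
    reaches_detour h₀ h₁
  have jump₁₂ : Reaches (.ofFree free₁ (i, 1)) (.ofFree free₁ (i, 2)) 0 :=
    reaches_cycle_jump_add_one (by decide : (1 : ZMod 3) ≠ 2) h₁₁ h₁₂
  have detour₂₀ : Reaches (.ofFree free₁ (i, 2)) (.ofFree free₂ (i, 0)) (Pi.single i 0) :=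
    reaches_detour h₁₂ h₁₀
  have jump₀₁ : Reaches (.ofFree free₂ (i, 0)) (.ofFree free₂ (i, 1)) 0 :=
    reaches_cycle_jump_add_one (by decide : (0 : ZMod 3) ≠ 2) h₂₀ h₂₁
  have detour₁₂ : Reaches (.ofFree free₂ (i, 1)) (.ofFree free (i, 2)) (Pi.single i 1) :=
    hrestore ▸ reaches_detour h₂₁ h₂₂
  convert (((detour₀₁.trans jump₁₂).trans detour₂₀).trans jump₀₁).trans detour₁₂ using 1
  simp [← Pi.single_add]

end Crossing

section Circuit

/-- The free vertices of the starting positions: the triangle vertex in the middle pair `(i,1)` of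
each triangle, the cycle vertex in all other pairs. -/
def homeFree (p : PairIdx m) : Bool := decide (p.2 ≠ 1)

/-- The starting position with the chip on the cycle vertex of the pair `p`, where `p.2 ≠ 1`. -/
noncomputable def home (p : PairIdx m) : Pos m := .ofFree homeFree p

theorem IsStarting.exists_eq_home [NeZero m] {P : Pos m} (hP : IsStarting P) :
    ∃ (i : Fin m) (j : ZMod 3), j ≠ 1 ∧ P = home (i, j) := by
  obtain ⟨hswitch, t, ht, hchip, hempty⟩ := hP
  obtain ⟨⟨i, j⟩, rfl⟩ := pairC_surjective t
  have hj : j ≠ 1 := fun hj ↦ ht i (by rw [hj])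
  refine ⟨i, j, hj, ?_⟩
  ext v
  obtain ⟨b, ⟨a, l⟩, rfl⟩ := exists_pairVtx_eq v
  simp only [home, Pos.ofFree, occOfFree_pairVtx]
  cases b with
  | false =>
    have hl : l = 0 ∨ l = 1 ∨ l = 2 := by
      clear * -
      revert l
      decide
    obtain ⟨h₀, h₁, h₂, -⟩ := hswitch a
    obtain rfl | rfl | rfl := hl <;> simp +decide [pairVtx, homeFree, h₀, h₁, h₂, hj.symm]
  | true =>
    by_cases hl : l = 1
    · simp [pairVtx, homeFree, hl, (hswitch a).2.2.2]
    by_cases hal : (a, l) = (i, j)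
    · cases hal
      simpa [pairVtx, homeFree, hj] using hchip
    · have hcycle := hempty (pairC a l) (pairC_injective.ne hal)
        fun i' h ↦ hl (Prod.ext_iff.1 (@pairC_injective m (a, l) (i', 1) h)).2
      simpa [pairVtx, homeFree, hl, hal] using hcycle

variable [NeZero m] (i : Fin m)

theorem reaches_next_triangle : Reaches (home (i, 2)) (home (i + 1, 0)) 0 :=
  reaches_cycle_jump rfl rfl (by simp +decide) (.inl (pairC_add_one_zero i))

theorem reaches_previous_triangle : Reaches (home (i + 1, 0)) (home (i, 2)) 0 :=
  reaches_cycle_jump rfl rfl (by simp +decide)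
    (.inr (eq_sub_of_add_eq (pairC_add_one_zero i).symm))

theorem reaches_add_ofNat (n : ℕ) :
    Reaches (home (i, 0)) (home (i + Fin.ofNat m n, 0))
      (∑ l ∈ Finset.range n, Pi.single (i + Fin.ofNat m l) 2) := by
  induction n with
  | zero => simpa using Reaches.refl (home (i, 0))
  | succ n ih =>
    have cross : Reaches (home (i + Fin.ofNat m n, 0)) (home (i + Fin.ofNat m n, 2))
        (Pi.single (i + Fin.ofNat m n) 2) :=
      reaches_cross rfl rfl rfl
    have step := (ih.trans cross).trans (reaches_next_triangle (i + Fin.ofNat m n))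
    have hsucc : Fin.ofNat m n + 1 = Fin.ofNat m (n + 1) := Fin.ext (by simp [Fin.val_add])
    rwa [add_zero, ← Finset.sum_range_succ, add_assoc, hsucc] at step

theorem sum_range_single_add_ofNat {M : Type*} [AddCommMonoid M] (x : M) :
    ∑ l ∈ Finset.range m, Pi.single (i + Fin.ofNat m l) x = fun _ : Fin m ↦ x := by
  calc ∑ l ∈ Finset.range m, Pi.single (i + Fin.ofNat m l) x
      = ∑ l : Fin m, (Pi.single (i + l) x : Fin m → M) := by simp [Finset.sum_range]
    _ = ∑ l : Fin m, Pi.single l x :=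
      Equiv.sum_comp (Equiv.addLeft i) fun l ↦ (Pi.single l x : Fin m → M)
    _ = fun _ ↦ x := Finset.univ_sum_single _

theorem reaches_circuit : Reaches (home (i, 0)) (home (i, 0)) fun _ ↦ 2 := by
  have circuit := reaches_add_ofNat i m
  have hzero : Fin.ofNat m m = 0 := Fin.ext (by simp)
  rwa [hzero, add_zero, sum_range_single_add_ofNat] at circuit

theorem IsStarting.reaches_self {P : Pos m} (hP : IsStarting P) : Reaches P P fun _ ↦ 2 := by
  obtain ⟨i, j, hj, rfl⟩ := hP.exists_eq_home
  have hj' : j = 0 ∨ j = 2 := by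
    clear hP
    revert j
    decide
  obtain rfl | rfl := hj'
  · exact reaches_circuit i
  · simpa only [zero_add, add_zero] using
      ((reaches_next_triangle i).trans (reaches_circuit (i + 1))).trans
        (reaches_previous_triangle i)

end Circuit

end AuxGame

open AuxGame in
/-- For every positive integer `k` there is a legal sequence
`σ` leading from the starting position `P` back to `P` with `F(σ, i, 2) = k`
for every `1 ≤ i ≤ m`. -/
theorem statement5 (m : ℕ) (hm : 1 ≤ m) (P : Pos m) (hP : IsStarting P)
    (k : ℕ) (hk : 1 ≤ k) :
    ∃ σ : List (Move m), Leads σ P P ∧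
      ∀ i : Fin m, flow σ (Vtx.tri i 1) = (k : ℚ) := by
  have : NeZero m := ⟨by omega⟩
  obtain ⟨σ, hσ, hdflow⟩ := hP.reaches_self.iterate k
  refine ⟨σ, hσ, fun i ↦ ?_⟩
  simp [flow, hdflow]
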